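/- Let C be a group system, t ∈ ℤ, and k ≥ 1. Then for every j with 0 ≤ j ≤ k: π^{[t,t+k]}(D_{k−1}^t) is a normal subgroup of π^{[t,t+k]}(D_k^t), β^{t+j}(D_{k−1}^t) is a normal subgroup of β^{t+j}(D_k^t), and the projection onto the (t+j)-th component induces an isomorphism π^{[t,t+k]}(D_k^t)/π^{[t,t+k]}(D_{k−1}^t) ≅ β^{t+j}(D_k^t)/β^{t+j}(D_{k−1}^t). -/

import Mathlib

open scoped Pointwise

namespace GroupSystemPaper

variable {A : ℤ → Type*} [∀ t, Group (A t)]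

/-- `C^{t+}` : codewords of the group system `C` that are the identity before time `t`. -/
def Cplus (C : Subgroup (∀ t, A t)) (t : ℤ) : Subgroup C where
  carrier := {a | ∀ n < t, (a : ∀ s, A s) n = 1}
  one_mem' := by intro n hn; simp
  mul_mem' := by intro a b ha hb n hn; simp [ha n hn, hb n hn]
  inv_mem' := by intro a ha n hn; simp [ha n hn]

/-- `C^{t−}` : codewords of the group system `C` that are the identity from time `t` on. -/
def Cminus (C : Subgroup (∀ t, A t)) (t : ℤ) : Subgroup C where
  carrier := {a | ∀ n, t ≤ n → (a : ∀ s, A s) n = 1}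
  one_mem' := by intro n hn; simp
  mul_mem' := by intro a b ha hb n hn; simp [ha n hn, hb n hn]
  inv_mem' := by intro a ha n hn; simp [ha n hn]

/-- `C^{[t₁,t₂]}` : codewords supported on the interval `[t₁, t₂]`. -/
def Cint (C : Subgroup (∀ t, A t)) (t₁ t₂ : ℤ) : Subgroup C :=
  Cplus C t₁ ⊓ Cminus C (t₂ + 1)

instance Cplus_normal (C : Subgroup (∀ t, A t)) (t : ℤ) : (Cplus C t).Normal := by
  constructor
  intro x hx g n hn
  have h1 : (x : ∀ s, A s) n = 1 := hx n hn
  simp [h1]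

instance Cminus_normal (C : Subgroup (∀ t, A t)) (t : ℤ) : (Cminus C t).Normal := by
  constructor
  intro x hx g n hn
  have h1 : (x : ∀ s, A s) n = 1 := hx n hn
  simp [h1]

instance Cint_normal (C : Subgroup (∀ t, A t)) (t₁ t₂ : ℤ) : (Cint C t₁ t₂).Normal := by
  constructor
  intro x hx g
  rcases Subgroup.mem_inf.mp hx with ⟨h1, h2⟩
  exact Subgroup.mem_inf.mpr
    ⟨(Cplus_normal C t₁).conj_mem _ h1 g, (Cminus_normal C (t₂ + 1)).conj_mem _ h2 g⟩

/-- The normal subgroup `C^{t−}C^{t+}` of `C`. -/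
def stateN (C : Subgroup (∀ t, A t)) (t : ℤ) : Subgroup C :=
  Cminus C t ⊔ Cplus C t

instance stateN_normal (C : Subgroup (∀ t, A t)) (t : ℤ) : (stateN C t).Normal :=
  Subgroup.sup_normal _ _

/-- The canonical state space `Σ^t = C/(C^{t−}C^{t+})`. -/
abbrev State (C : Subgroup (∀ t, A t)) (t : ℤ) : Type _ :=
  ↥C ⧸ stateN C t

/-- The state projection `σ^t : C → Σ^t`. -/
def sigma (C : Subgroup (∀ t, A t)) (t : ℤ) : ↥C →* State C t :=
  QuotientGroup.mk' (stateN C t)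

/-- The evaluation homomorphism `χ^t : C → A^t`. -/
def evalHom (C : Subgroup (∀ t, A t)) (t : ℤ) : ↥C →* A t :=
  (Pi.evalMonoidHom A t).comp C.subtype

/-- The branch homomorphism `β^t : C → Σ^t × A^t × Σ^{t+1}`. -/
def beta (C : Subgroup (∀ t, A t)) (t : ℤ) :
    ↥C →* State C t × A t × State C (t + 1) :=
  (sigma C t).prod ((evalHom C t).prod (sigma C (t + 1)))

/-- The branch group `B^t = β^t(C)`. -/
def Branch (C : Subgroup (∀ t, A t)) (t : ℤ) :
    Subgroup (State C t × A t × State C (t + 1)) :=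
  (beta C t).range

/-- `β^t` with codomain restricted to the branch group `B^t`. -/
def betaRes (C : Subgroup (∀ t, A t)) (t : ℤ) : ↥C →* ↥(Branch C t) :=
  (beta C t).rangeRestrict

/-- `X_j^t = β^t(C^{(t−j)+})` as a subgroup of the branch group `B^t`. -/
def X (C : Subgroup (∀ t, A t)) (j t : ℤ) : Subgroup ↥(Branch C t) :=
  (Cplus C (t - j)).map (betaRes C t)

/-- `Y_i^t = β^t(C^{(t+i+1)−})` as a subgroup of the branch group `B^t`. -/
def Y (C : Subgroup (∀ t, A t)) (i t : ℤ) : Subgroup ↥(Branch C t) :=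
  (Cminus C (t + i + 1)).map (betaRes C t)

instance X_normal (C : Subgroup (∀ t, A t)) (j t : ℤ) : (X C j t).Normal :=
  (Cplus_normal C (t - j)).map _ (MonoidHom.rangeRestrict_surjective _)

instance Y_normal (C : Subgroup (∀ t, A t)) (i t : ℤ) : (Y C i t).Normal :=
  (Cminus_normal C (t + i + 1)).map _ (MonoidHom.rangeRestrict_surjective _)

/-- `Δ_k^t = X_0^t ∩ Y_k^t`. -/
def Del (C : Subgroup (∀ t, A t)) (k t : ℤ) : Subgroup ↥(Branch C t) :=
  X C 0 t ⊓ Y C k t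

/-- `D_k^t = {a ∈ C : β^t(a) ∈ Δ_k^t}`. -/
def D (C : Subgroup (∀ t, A t)) (k t : ℤ) : Subgroup ↥C :=
  (Del C k t).comap (betaRes C t)

/-- Following-branch operator: for `S ⊆ B^{t₁}`,
`FSet C t₁ t₂ S = {β^{t₂}(a) : a ∈ C, β^{t₁}(a) ∈ S}`. -/
def FSet (C : Subgroup (∀ t, A t)) (t₁ t₂ : ℤ) (S : Set ↥(Branch C t₁)) :
    Set ↥(Branch C t₂) :=
  {x | ∃ a : ↥C, betaRes C t₁ a ∈ S ∧ betaRes C t₂ a = x}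

/-- `π^{[t,t+k]} : C → B^t × ⋯ × B^{t+k}`, `a ↦ (β^t(a), …, β^{t+k}(a))`. -/
def piSeg (C : Subgroup (∀ t, A t)) (t : ℤ) (k : ℕ) :
    ↥C →* ∀ j : Fin (k + 1), ↥(Branch C (t + ((j : ℕ) : ℤ))) where
  toFun a := fun j => betaRes C (t + ((j : ℕ) : ℤ)) a
  map_one' := by funext j; simp
  map_mul' a b := by funext j; simp

/-- `π^{[t,t+k]}(D_m^t)`. -/
def Pseg (C : Subgroup (∀ t, A t)) (t : ℤ) (k : ℕ) (m : ℤ) :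
    Subgroup (∀ j : Fin (k + 1), ↥(Branch C (t + ((j : ℕ) : ℤ)))) :=
  (D C m t).map (piSeg C t k)

/-- `β^{t+j}(D_m^t)` : the image of `D_m^t` in the branch group at time `t + j`. -/
def Qb (C : Subgroup (∀ t, A t)) (t m j : ℤ) : Subgroup ↥(Branch C (t + j)) :=
  (D C m t).map (betaRes C (t + j))

/-- The normal subgroup `C^{[t,t+k−1]}C^{[t+1,t+k]}` of `C` (denominator of the granule). -/
def granN (C : Subgroup (∀ t, A t)) (t : ℤ) (k : ℕ) : Subgroup ↥C :=
  Cint C t (t + k - 1) ⊔ Cint C (t + 1) (t + k)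

instance granN_normal (C : Subgroup (∀ t, A t)) (t : ℤ) (k : ℕ) : (granN C t k).Normal :=
  Subgroup.sup_normal _ _

lemma mem_D_of_mem_Cint (C : Subgroup (∀ t, A t)) (t : ℤ) (k : ℕ) {a : ↥C}
    (ha : a ∈ Cint C t (t + k)) : a ∈ D C (k : ℤ) t := by
  rcases Subgroup.mem_inf.mp ha with ⟨h1, h2⟩
  refine Subgroup.mem_comap.mpr (Subgroup.mem_inf.mpr ⟨?_, ?_⟩)
  · exact Subgroup.mem_map.mpr ⟨a, by simpa using h1, rfl⟩
  · exact Subgroup.mem_map.mpr ⟨a, h2, rfl⟩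

/-- `ℓ`-controllability of the group system `C`. -/
def Controllable (C : Subgroup (∀ t, A t)) (ℓ : ℕ) : Prop :=
  ∀ a b : ↥C, ∀ t : ℤ, ∃ c : ↥C,
    (∀ n < t, (c : ∀ s, A s) n = (a : ∀ s, A s) n) ∧
    (∀ n, t + (ℓ : ℤ) ≤ n → (c : ∀ s, A s) n = (b : ∀ s, A s) n)


section Helpers

lemma map_subgroupOf_normal {G H : Type*} [Group G] [Group H] (f : G →* H)
    (M N : Subgroup G) [hN : N.Normal] : ((N.map f).subgroupOf (M.map f)).Normal := by
  constructor
  rintro ⟨x, hx⟩ hxN ⟨g, hg⟩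
  rw [Subgroup.mem_subgroupOf] at hxN ⊢
  obtain ⟨n, hn, hnx⟩ := hxN
  obtain ⟨m, hm, hmg⟩ := hg
  refine ⟨m * n * m⁻¹, hN.conj_mem n hn m, ?_⟩
  simp only [map_mul, map_inv, hnx, hmg]
  rfl

/-- The composite `M → f(M) → f(M)/f(N)`. -/
def toQuot {G H : Type*} [Group G] [Group H] (f : G →* H)
    (M N : Subgroup G) [((N.map f).subgroupOf (M.map f)).Normal] :
    ↥M →* ↥(M.map f) ⧸ (N.map f).subgroupOf (M.map f) :=
  (QuotientGroup.mk' _).comp (f.subgroupMap M)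

lemma toQuot_surjective {G H : Type*} [Group G] [Group H] (f : G →* H)
    (M N : Subgroup G) [((N.map f).subgroupOf (M.map f)).Normal] :
    Function.Surjective (toQuot f M N) :=
  (QuotientGroup.mk'_surjective _).comp (f.subgroupMap_surjective M)

lemma toQuot_ker {G H : Type*} [Group G] [Group H] (f : G →* H)
    (M N : Subgroup G) [((N.map f).subgroupOf (M.map f)).Normal]
    (h : ∀ a ∈ M, ∀ d ∈ N, f a = f d → a ∈ N) :
    (toQuot f M N).ker = N.subgroupOf M := by
  ext ⟨a, ha⟩
  rw [MonoidHom.mem_ker, Subgroup.mem_subgroupOf]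
  have h0 : toQuot f M N ⟨a, ha⟩ = 1 ↔ f a ∈ N.map f := by
    simp only [toQuot, MonoidHom.comp_apply, QuotientGroup.mk'_apply]
    rw [QuotientGroup.eq_one_iff, Subgroup.mem_subgroupOf]
    rfl
  rw [h0]
  constructor
  · rintro ⟨d, hd, hda⟩
    exact h a ha d hd hda.symm
  · intro h
    exact Subgroup.mem_map_of_mem f h

lemma exists_quot_equiv {G H K : Type*} [Group G] [Group H] [Group K] (f : G →* H) (g : G →* K)
    (M N : Subgroup G) [((N.map f).subgroupOf (M.map f)).Normal]
    [((N.map g).subgroupOf (M.map g)).Normal]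
    (hf : ∀ a ∈ M, ∀ d ∈ N, f a = f d → a ∈ N)
    (hg : ∀ a ∈ M, ∀ d ∈ N, g a = g d → a ∈ N) :
    ∃ e : (↥(M.map f) ⧸ (N.map f).subgroupOf (M.map f)) ≃*
        (↥(M.map g) ⧸ (N.map g).subgroupOf (M.map g)),
      ∀ (a : G) (ha : a ∈ M),
        e (QuotientGroup.mk ⟨f a, Subgroup.mem_map_of_mem _ ha⟩) =
          QuotientGroup.mk ⟨g a, Subgroup.mem_map_of_mem _ ha⟩ := by
  have hk : (toQuot f M N).ker = (toQuot g M N).ker := by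
    rw [toQuot_ker f M N hf, toQuot_ker g M N hg]
  refine ⟨((QuotientGroup.quotientKerEquivOfSurjective _ (toQuot_surjective f M N)).symm.trans
    (QuotientGroup.quotientMulEquivOfEq hk)).trans
    (QuotientGroup.quotientKerEquivOfSurjective _ (toQuot_surjective g M N)), ?_⟩
  intro a ha
  have h1 : (QuotientGroup.quotientKerEquivOfSurjective _ (toQuot_surjective f M N)).symm
      (QuotientGroup.mk ⟨f a, Subgroup.mem_map_of_mem _ ha⟩) =
      QuotientGroup.mk (⟨a, ha⟩ : ↥M) := by
    rw [MulEquiv.symm_apply_eq]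
    rfl
  simp only [MulEquiv.trans_apply]
  rw [h1]
  rfl

instance D_normal (C : Subgroup (∀ t, A t)) (k t : ℤ) : (D C k t).Normal := by
  have : (Del C k t).Normal := by
    unfold Del
    infer_instance
  exact this.comap _

lemma betaRes_eq_one_iff (C : Subgroup (∀ t, A t)) (t : ℤ) (a : ↥C) :
    betaRes C t a = 1 ↔ a ∈ stateN C t ∧ (a : ∀ s, A s) t = 1 ∧ a ∈ stateN C (t + 1) := by
  rw [Subtype.ext_iff]
  change (sigma C t a, evalHom C t a, sigma C (t + 1) a) = (1, 1, 1) ↔ _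
  simp only [Prod.mk.injEq]
  refine and_congr (QuotientGroup.eq_one_iff a) (and_congr Iff.rfl (QuotientGroup.eq_one_iff a))

lemma ker_decomp (C : Subgroup (∀ t, A t)) (t : ℤ) (a : ↥C) (h : betaRes C t a = 1) :
    ∃ p ∈ Cminus C t, ∃ q ∈ Cplus C (t + 1), p * q = a := by
  obtain ⟨h1, h2, -⟩ := (betaRes_eq_one_iff C t a).1 h
  obtain ⟨p, hp, q, hq, rfl⟩ := Subgroup.mem_sup_of_normal_right.1 h1
  refine ⟨p, hp, q, ?_, rfl⟩
  intro n hn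
  rcases lt_or_eq_of_le (Int.lt_add_one_iff.1 hn) with hlt | rfl
  · exact hq n hlt
  · have := hp n le_rfl
    simpa [this] using h2

lemma Cplus_mono (C : Subgroup (∀ t, A t)) {s t : ℤ} (h : s ≤ t) : Cplus C t ≤ Cplus C s :=
  fun _ ha n hn => ha n (lt_of_lt_of_le hn h)

lemma Cminus_mono (C : Subgroup (∀ t, A t)) {s t : ℤ} (h : s ≤ t) : Cminus C s ≤ Cminus C t :=
  fun _ ha n hn => ha n (h.trans hn)

lemma Cplus_le_D (C : Subgroup (∀ t, A t)) (m t : ℤ) : Cplus C (t + 1) ≤ D C m t := by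
  intro a ha
  have : betaRes C t a = 1 := (betaRes_eq_one_iff C t a).2
    ⟨Subgroup.mem_sup_right (Cplus_mono C (by omega) ha), ha t (by omega),
      Subgroup.mem_sup_right ha⟩
  rw [D, Subgroup.mem_comap, this]
  exact one_mem _

lemma D_mono (C : Subgroup (∀ t, A t)) {m k : ℤ} (t : ℤ) (h : m ≤ k) : D C m t ≤ D C k t :=
  Subgroup.comap_mono (inf_le_inf le_rfl (Subgroup.map_mono (Cminus_mono C (by omega))))

lemma mem_D_of_betaRes_eq (C : Subgroup (∀ t, A t)) (t : ℤ) (k j : ℕ) (hj : j ≤ k)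
    (a : ↥C) (ha : a ∈ D C (k : ℤ) t) (d : ↥C) (hd : d ∈ D C ((k : ℤ) - 1) t)
    (h : betaRes C (t + (j : ℤ)) a = betaRes C (t + (j : ℤ)) d) :
    a ∈ D C ((k : ℤ) - 1) t := by
  have h1 : betaRes C (t + (j : ℤ)) (d⁻¹ * a) = 1 := by
    rw [map_mul, map_inv, h, inv_mul_cancel]
  obtain ⟨p, hp, q, hq, hpq⟩ := ker_decomp C _ _ h1
  have hqD : q ∈ Cplus C (t + 1) := Cplus_mono C (by omega) hq
  have hpD : p ∈ D C (k : ℤ) t := by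
    have : p = d⁻¹ * a * q⁻¹ := by rw [← hpq]; group
    rw [this]
    exact mul_mem (mul_mem (inv_mem (D_mono C t (by omega) hd)) ha)
      (inv_mem (Cplus_le_D C _ t hqD))
  have hpD' : p ∈ D C ((k : ℤ) - 1) t := by
    refine Subgroup.mem_comap.2 (Subgroup.mem_inf.2
      ⟨(Subgroup.mem_inf.1 (Subgroup.mem_comap.1 hpD)).1, ?_⟩)
    exact Subgroup.mem_map_of_mem _ (Cminus_mono C (by omega) hp)
  have : a = d * (p * q) := by rw [hpq]; group
  rw [this]
  exact mul_mem hd (mul_mem hpD' (Cplus_le_D C _ t hqD))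

end Helpers

/-- For `k ≥ 1` and `0 ≤ j ≤ k`: `π^{[t,t+k]}(D_{k−1}^t)` is normal in
`π^{[t,t+k]}(D_k^t)`, `β^{t+j}(D_{k−1}^t)` is normal in `β^{t+j}(D_k^t)`, and projection
onto the `(t+j)`-th component induces an isomorphism
`π^{[t,t+k]}(D_k^t)/π^{[t,t+k]}(D_{k−1}^t) ≅ β^{t+j}(D_k^t)/β^{t+j}(D_{k−1}^t)`. -/
theorem statement13 (C : Subgroup (∀ t, A t)) (t : ℤ) (k : ℕ) (hk : 1 ≤ k)
    (j : ℕ) (hj : j ≤ k) :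
    ((Pseg C t k ((k : ℤ) - 1)).subgroupOf (Pseg C t k (k : ℤ))).Normal ∧
    ((Qb C t ((k : ℤ) - 1) (j : ℤ)).subgroupOf (Qb C t (k : ℤ) (j : ℤ))).Normal ∧
    ∀ (h1 : ((Pseg C t k ((k : ℤ) - 1)).subgroupOf (Pseg C t k (k : ℤ))).Normal)
      (h2 : ((Qb C t ((k : ℤ) - 1) (j : ℤ)).subgroupOf (Qb C t (k : ℤ) (j : ℤ))).Normal),
      haveI := h1
      haveI := h2
      ∃ e : (↥(Pseg C t k (k : ℤ)) ⧸
               (Pseg C t k ((k : ℤ) - 1)).subgroupOf (Pseg C t k (k : ℤ))) ≃*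
            (↥(Qb C t (k : ℤ) (j : ℤ)) ⧸
               (Qb C t ((k : ℤ) - 1) (j : ℤ)).subgroupOf (Qb C t (k : ℤ) (j : ℤ))),
        ∀ (a : ↥C) (ha : a ∈ D C (k : ℤ) t),
          e (QuotientGroup.mk ⟨piSeg C t k a, Subgroup.mem_map_of_mem _ ha⟩) =
            QuotientGroup.mk ⟨betaRes C (t + (j : ℤ)) a, Subgroup.mem_map_of_mem _ ha⟩ := by
  refine ⟨map_subgroupOf_normal _ _ _, map_subgroupOf_normal _ _ _, ?_⟩
  intro h1 h2
  have : (((D C ((k : ℤ) - 1) t).map (piSeg C t k)).subgroupOf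
    ((D C (k : ℤ) t).map (piSeg C t k))).Normal := h1
  have : (((D C ((k : ℤ) - 1) t).map (betaRes C (t + (j : ℤ)))).subgroupOf
    ((D C (k : ℤ) t).map (betaRes C (t + (j : ℤ))))).Normal := h2
  refine exists_quot_equiv (piSeg C t k) (betaRes C (t + (j : ℤ))) (D C (k : ℤ) t)
    (D C ((k : ℤ) - 1) t) ?_ ?_
  · intro a ha d hd had
    exact mem_D_of_betaRes_eq C t k j hj a ha d hd
      (congrFun had ⟨j, Nat.lt_succ_of_le hj⟩)
  · exact mem_D_of_betaRes_eq C t k j hj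

end GroupSystemPaper
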